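/- Let (𝔩,𝔪) be a permissible pair with 𝔪 a nonzero multisegment. Then the width of the multisegment K'(𝔩,𝔪) produced by the inverse Knuth–Viennot algorithm satisfies ω(K'(𝔩,𝔪)) = ω(𝔪) + 1. -/

import Mathlib

/-!
The width of a multisegment `Σ_{a ∈ A} f(a)` is the least number of colours in a colouring of `A`
whose classes are pairwise `≪`-comparable (`widthM_le_of_coloring`, `exists_coloring_widthM`). It
therefore suffices to turn a colouring of `𝔪` with `w` colours into one of `K'(𝔩,𝔪)` with `w + 1`
colours, and a colouring of `K'(𝔩,𝔪)` with `W` colours into one of `𝔪` with `W - 1` colours.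

Draw a segment as the point `(b, e)` of the plane. The `Δ_i` of depth `t` form a nested family, and
they are the lower left corners of a staircase whose two unbounded ends are the half-lines through
`Δ_{j_t}`; the points `♣x` with `𝔡(x) = t` are its upper right corners. The definition of the depth
says that each `Δ_i` lies strictly above every staircase of larger depth (`exists_below`), so
staircases of different depths do not cross (`noncrossing`). Ties between begin or end points are
broken by the lexicographic encodings `B` and `E`; `club_ll` shows that this creates no new
comparabilities between the points `♣x`.

By noncrossing, between two nested points `♣x`, `♣z` there is a `Δ_i`, and between two nested
`Δ_i`, `Δ_{i'}` there is a point `♣x`. Colour a point of one kind by the largest size of a nested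
family of points of the other kind to its lower right: nested points get different colours, so each
colour class consists of comparable segments. The size is at most the number of colours of the given
colouring, since nested points have different colours. For `♣x` this gives values in `{0, …, w}`
(`KVData.upper`). For `Δ_i` the points `♣σ⁻¹(i)` and `♣i`, to its lower right and upper left, force
the value into `{1, …, W - 1}` (`KVData.lower`).
-/

/-- A *segment* `Δ(a,b)`: a pair of integers `a ≤ b`.  `b` is the begin point
and `e` the end point. -/
structure Segment where
  b : ℤ
  e : ℤ
  le : b ≤ e

namespace Segment

/-- `Δ₁ ≪ Δ₂` : `b(Δ₁) < b(Δ₂)` and `e(Δ₁) < e(Δ₂)`. -/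
def ll (Δ₁ Δ₂ : Segment) : Prop := Δ₁.b < Δ₂.b ∧ Δ₁.e < Δ₂.e

/-- `Δ₁ ≺ Δ₂` : `b(Δ₁) < b(Δ₂)`, `e(Δ₁) < e(Δ₂)` and `e(Δ₁) ≥ b(Δ₂) - 1`. -/
def prec (Δ₁ Δ₂ : Segment) : Prop := Δ₁.b < Δ₂.b ∧ Δ₁.e < Δ₂.e ∧ Δ₂.b - 1 ≤ Δ₁.e

/-- `⁻Δ = Δ(a-1, b-1)`. -/
def shiftDown (Δ : Segment) : Segment := ⟨Δ.b - 1, Δ.e - 1, by have := Δ.le; omega⟩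

end Segment

/-- The standing data of the inverse Knuth–Viennot algorithm: a nonzero multisegment
`𝔪 = Σ_{i ∈ I} Δ_i` indexed by `I = Fin n` (linearly ordered compatibly with begin
points, ties broken by reversed end points), and a ladder multisegment
`𝔩 = Σ_{t ∈ J} Δ_{j_t}` indexed by `J = Fin l` (`jseg t` is the segment `Δ_{j_{t+1}}`,
enumerated so that `Δ_{j_l} ≪ ⋯ ≪ Δ_{j_1}`), such that the pair `(𝔩, 𝔪)` is
permissible. -/
structure KVData where
  n : ℕ
  l : ℕ
  npos : 0 < n
  lpos : 0 < l
  iseg : Fin n → Segment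
  jseg : Fin l → Segment
  iOrder : ∀ i₁ i₂ : Fin n, i₂ < i₁ →
    (iseg i₂).b < (iseg i₁).b ∨ ((iseg i₂).b = (iseg i₁).b ∧ (iseg i₁).e ≤ (iseg i₂).e)
  ladder : ∀ t t' : Fin l, t < t' → Segment.ll (jseg t') (jseg t)
  permissible : ∀ (m : ℕ) (c : Fin m → Fin n),
    (∀ r s : Fin m, r < s → Segment.ll (iseg (c s)) (iseg (c r))) →
    ∃ φ : Fin m → Fin l, StrictMono φ ∧
      ∀ t : Fin m, Segment.prec (Segment.shiftDown (iseg (c t))) (jseg (φ t))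

namespace KVData

variable (D : KVData)

/-- The segment attached to an index in `I ⊔ J`. -/
def segOf : Fin D.n ⊕ Fin D.l → Segment := Sum.elim D.iseg D.jseg

/-- The set `{t : ⁻Δ_i ≪ Δ_{j_t}}` (0-based positions in the ladder `𝔩`). -/
def dPrimeSet (i : Fin D.n) : Set ℕ :=
  {t : ℕ | ∃ h : t < D.l, Segment.ll (Segment.shiftDown (D.iseg i)) (D.jseg ⟨t, h⟩)}

/-- The set `{𝔡'(i_k) - k : i = i_0, Δ_{i_{r+1}} ≪ Δ_{i_r}}` whose minimum is `𝔡(i)`. -/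
def depthSet (d' : Fin D.n → ℕ) (i : Fin D.n) : Set ℤ :=
  {z : ℤ | ∃ (k : ℕ) (c : ℕ → Fin D.n), c 0 = i ∧
    (∀ r < k, Segment.ll (D.iseg (c (r + 1))) (D.iseg (c r))) ∧
    z = (d' (c k) : ℤ) - (k : ℤ)}

/-- `d'` is the function `𝔡'` and `d` the depth function `𝔡` on `I ⊔ J`
(`𝔡'(i) = max{t : ⁻Δ_i ≪ Δ_{j_t}}`, `𝔡(i) = min{𝔡'(i_k) - k}`, `𝔡(j_t) = t`). -/
def DepthSpec (d' : Fin D.n → ℕ) (d : Fin D.n ⊕ Fin D.l → ℤ) : Prop :=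
  (∀ i, IsGreatest (D.dPrimeSet i) (d' i)) ∧
  (∀ i, IsLeast (D.depthSet d' i) (d (Sum.inl i))) ∧
  (∀ t : Fin D.l, d (Sum.inr t) = (t : ℤ))

/-- `σ` is the permutation of `I ⊔ J` whose disjoint cycles are `(i_1, …, i_s, j_t)`
where `{i_1 > … > i_s} ∪ {j_t} = 𝔡⁻¹(t)`:  an element `i ∈ I` is sent to the largest
element of `I` below it in its fiber of `𝔡`, or to the `J`-element of the fiber if
there is none; the `J`-element of a fiber is sent to the largest `I`-element of the
fiber, or to itself if there is none. -/
def SigmaSpec (d : Fin D.n ⊕ Fin D.l → ℤ) (σ : Equiv.Perm (Fin D.n ⊕ Fin D.l)) : Prop :=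
  (∀ i : Fin D.n,
    (∃ i' : Fin D.n,
        IsGreatest {i'' : Fin D.n | i'' < i ∧ d (Sum.inl i'') = d (Sum.inl i)} i' ∧
        σ (Sum.inl i) = Sum.inl i')
    ∨ ((¬ ∃ i'' : Fin D.n, i'' < i ∧ d (Sum.inl i'') = d (Sum.inl i)) ∧
        ∃ t : Fin D.l, (t : ℤ) = d (Sum.inl i) ∧ σ (Sum.inl i) = Sum.inr t)) ∧
  (∀ t : Fin D.l,
    (∃ i : Fin D.n,
        IsGreatest {i' : Fin D.n | d (Sum.inl i') = (t : ℤ)} i ∧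
        σ (Sum.inr t) = Sum.inl i)
    ∨ ((¬ ∃ i : Fin D.n, d (Sum.inl i) = (t : ℤ)) ∧ σ (Sum.inr t) = Sum.inr t))

/-- `e(Δ♣_x) ≠ e(Δ_x)`, i.e. the end point changes at `x`
(recall `Δ♣_x = Δ(b(Δ_x), e(Δ_{σ(x)}))`). -/
def breaksEnd (σ : Equiv.Perm (Fin D.n ⊕ Fin D.l)) (x : Fin D.n ⊕ Fin D.l) : Prop :=
  (D.segOf (σ x)).e ≠ (D.segOf x).e

/-- `vee` is the map `x ↦ x^∨`:  `x^∨ = σ^{-r}(x)` for the least `r ≥ 1` such that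
`e(Δ♣_{σ^{-r}(x)}) ≠ e(Δ_{σ^{-r}(x)})`, and `x^∨ = j_{𝔡(x)}` if no such `r` exists. -/
def VeeSpec (d : Fin D.n ⊕ Fin D.l → ℤ) (σ : Equiv.Perm (Fin D.n ⊕ Fin D.l))
    (vee : Fin D.n ⊕ Fin D.l → Fin D.n ⊕ Fin D.l) : Prop :=
  ∀ x : Fin D.n ⊕ Fin D.l,
    ((∃ r : ℕ, 1 ≤ r ∧ D.breaksEnd σ ((⇑σ.symm)^[r] x)) →
      ∃ r : ℕ, 1 ≤ r ∧ vee x = (⇑σ.symm)^[r] x ∧ D.breaksEnd σ ((⇑σ.symm)^[r] x) ∧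
        ∀ r' : ℕ, 1 ≤ r' → r' < r → ¬ D.breaksEnd σ ((⇑σ.symm)^[r'] x)) ∧
    ((¬ ∃ r : ℕ, 1 ≤ r ∧ D.breaksEnd σ ((⇑σ.symm)^[r] x)) →
      ∃ t : Fin D.l, (t : ℤ) = d x ∧ vee x = Sum.inr t)

/-- The multisegment `𝔪` of the data. -/
def mSeg : Multiset Segment := Multiset.map D.iseg Finset.univ.val

/-- The ladder multisegment `𝔩` of the data. -/
def lSeg : Multiset Segment := Multiset.map D.jseg Finset.univ.val

end KVData
/-- `𝔫 = K'(𝔩, 𝔪)` for the inverse Knuth–Viennot algorithm: there is an indexing of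
the permissible pair `(𝔩, 𝔪)` as in `KVData`, together with depth functions, the
permutation `σ` and the segments `Δ♣_x = Δ(b(Δ_x), e(Δ_{σ(x)}))`, realizing
`𝔫 = Σ_{x ∈ I ∪ J} Δ♣_x`. -/
def IsKnuthStep (𝔩 𝔪 𝔫 : Multiset Segment) : Prop :=
  ∃ (D : KVData) (d' : Fin D.n → ℕ) (d : Fin D.n ⊕ Fin D.l → ℤ)
    (σ : Equiv.Perm (Fin D.n ⊕ Fin D.l)) (club : Fin D.n ⊕ Fin D.l → Segment),
    D.DepthSpec d' d ∧ D.SigmaSpec d σ ∧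
    (∀ x, (club x).b = (D.segOf x).b) ∧ (∀ x, (club x).e = (D.segOf (σ x)).e) ∧
    𝔪 = D.mSeg ∧ 𝔩 = D.lSeg ∧ 𝔫 = Multiset.map club Finset.univ.val

/-- A ladder multisegment: a nonzero multisegment whose segments can be enumerated
`Δ_l ≪ Δ_{l-1} ≪ ⋯ ≪ Δ_1`. -/
def IsLadderM (𝔩 : Multiset Segment) : Prop :=
  ∃ (k : ℕ) (f : Fin k → Segment), 0 < k ∧
    (∀ s t : Fin k, s < t → Segment.ll (f t) (f s)) ∧
    𝔩 = Multiset.map f Finset.univ.val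

/-- The width `ω(𝔫)`: the minimal number of ladder multisegments whose sum is `𝔫`. -/
noncomputable def widthM (𝔫 : Multiset Segment) : ℕ :=
  sInf {k : ℕ | ∃ f : Fin k → Multiset Segment, (∀ j, IsLadderM (f j)) ∧ 𝔫 = ∑ j, f j}

/-- `C(𝔪₁, 𝔪₂) = #{(i,j) : b(Δ¹_i) = e(Δ²_j) + 1}`, pairs counted with multiplicity. -/
def Cfun (𝔫₁ 𝔫₂ : Multiset Segment) : ℕ :=
  Multiset.card ((Multiset.product 𝔫₁ 𝔫₂).filter fun p => p.1.b = p.2.e + 1)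

/-- `𝔟(𝔫) ∈ Q₊`: the multiset of begin points (`Q₊`, the free commutative monoid on
the symbols `α_i`, `i ∈ ℤ`, is realized as `Multiset ℤ`). -/
def bwt (𝔫 : Multiset Segment) : Multiset ℤ := Multiset.map Segment.b 𝔫

/-- `𝔢(𝔫) ∈ Q₊`: the multiset of end points. -/
def ewt (𝔫 : Multiset Segment) : Multiset ℤ := Multiset.map Segment.e 𝔫

/-! ### Widths as colouring numbers -/

/-- Comparability of two segments for `≪`. -/
def Segment.Comp (Δ Δ' : Segment) : Prop := Segment.ll Δ Δ' ∨ Segment.ll Δ' Δ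

lemma map_univ_eq_sum {A : Type*} [Fintype A] (f : A → Segment) :
    Multiset.map f Finset.univ.val = ∑ a, {f a} := by
  rw [← Multiset.sum_map_singleton (Multiset.map f Finset.univ.val), Multiset.map_map]
  rfl

/-- Two indexings of the same multiset differ by a bijection of the index types. -/
lemma exists_equiv_of_map_univ_eq {A B S : Type*} [Fintype A] [Fintype B] (f : A → S)
    (g : B → S) (h : Multiset.map f Finset.univ.val = Multiset.map g Finset.univ.val) :
    ∃ e : A ≃ B, ∀ a, f a = g (e a) := by
  classical
  have hc : ∀ s, Nonempty ({a // f a = s} ≃ {b // g b = s}) := by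
    intro s
    apply Fintype.card_eq.1
    have := congrArg (Multiset.count s) h
    rw [Multiset.count_map, Multiset.count_map] at this
    rw [Fintype.card_subtype, Fintype.card_subtype]
    simpa [Finset.card_def, Finset.filter_val, eq_comm] using this
  let es := fun s => (hc s).some
  refine ⟨(Equiv.sigmaFiberEquiv f).symm.trans
    ((Equiv.sigmaCongrRight es).trans (Equiv.sigmaFiberEquiv g)), fun a => ?_⟩
  exact ((es (f a)) ⟨a, rfl⟩).2.symm

lemma isLadderM_of_comp {A : Type*} [Fintype A] [Nonempty A] (f : A → Segment)
    (h : ∀ a a', a ≠ a' → (f a).Comp (f a')) :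
    IsLadderM (Multiset.map f Finset.univ.val) := by
  have hinj : Function.Injective (fun a => -(f a).b) := by
    intro a a' haa
    by_contra hne
    simp only [neg_inj] at haa
    rcases h a a' hne with h | h
    · exact absurd h.1 (by omega)
    · exact absurd h.1 (by omega)
  let _ : LinearOrder A := LinearOrder.lift' (fun a => -(f a).b) hinj
  let e : Fin (Fintype.card A) ≃o A := Fintype.orderIsoFinOfCardEq A rfl
  refine ⟨Fintype.card A, fun s => f (e s), Fintype.card_pos, ?_, ?_⟩
  · intro s t hst
    have h1 : e s < e t := e.strictMono hst
    have h2 : -(f (e s)).b < -(f (e t)).b := h1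
    rcases h _ _ h1.ne with h | h
    · exact absurd h.1 (by omega)
    · exact h
  · have : (Finset.univ : Finset A).val
        = Multiset.map e (Finset.univ : Finset (Fin (Fintype.card A))).val := by
      have := Finset.map_univ_equiv e.toEquiv
      rw [← this]; rfl
    rw [this, Multiset.map_map]; rfl

/-- A colouring whose classes consist of pairwise comparable segments bounds the width;
unused colours are discarded, as ladders are nonzero. -/
lemma widthM_le_of_coloring {A : Type*} [Fintype A] (f : A → Segment) (k : ℕ) (c : A → ℕ)
    (hk : ∀ a, c a < k) (hc : ∀ a a', a ≠ a' → c a = c a' → (f a).Comp (f a')) :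
    widthM (Multiset.map f Finset.univ.val) ≤ k := by
  classical
  set T := Finset.univ.image c with hT
  have hTk : T.card ≤ k := by
    have : T ⊆ Finset.range k := by
      intro t ht
      obtain ⟨a, -, rfl⟩ := Finset.mem_image.1 ht
      exact Finset.mem_range.2 (hk a)
    simpa using Finset.card_le_card this
  refine le_trans (Nat.sInf_le ?_) hTk
  let g : Fin T.card ≃ T := T.equivFin.symm
  refine ⟨fun j => Multiset.map (fun a : {a // c a = (g j : ℕ)} => f a) Finset.univ.val, ?_, ?_⟩
  · intro j
    obtain ⟨a, -, ha⟩ := Finset.mem_image.1 (g j).2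
    have : Nonempty {a // c a = (g j : ℕ)} := ⟨⟨a, ha⟩⟩
    apply isLadderM_of_comp
    rintro ⟨a, ha⟩ ⟨a', ha'⟩ hne
    exact hc a a' (fun h => hne (Subtype.ext h)) (ha.trans ha'.symm)
  · simp only [map_univ_eq_sum]
    rw [Equiv.sum_comp g (fun t : T => ∑ a : {a // c a = (t : ℕ)}, ({f a} : Multiset Segment)),
      Finset.sum_coe_sort T (fun t => ∑ a : {a // c a = t}, ({f a} : Multiset Segment)),
      ← Finset.sum_fiberwise_of_maps_to (s := Finset.univ) (t := T) (g := c)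
        (fun a ha => Finset.mem_image_of_mem c ha)]
    refine Finset.sum_congr rfl fun t _ => ?_
    exact (Finset.sum_subtype _ (by simp) (fun a => ({f a} : Multiset Segment)))

/-- Conversely the width is attained by such a colouring. -/
lemma exists_coloring_widthM {A : Type*} [Fintype A] (f : A → Segment) :
    ∃ c : A → ℕ, (∀ a, c a < widthM (Multiset.map f Finset.univ.val)) ∧
      ∀ a a', a ≠ a' → c a = c a' → (f a).Comp (f a') := by
  classical
  have hne : {k : ℕ | ∃ F : Fin k → Multiset Segment, (∀ j, IsLadderM (F j)) ∧
      Multiset.map f Finset.univ.val = ∑ j, F j}.Nonempty := by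
    let e := Fintype.equivFin A
    refine ⟨Fintype.card A, fun j => {f (e.symm j)}, fun j => ⟨1, fun _ => f (e.symm j), one_pos,
      fun s t h => absurd h (by simp [Subsingleton.elim s t]), by simp⟩, ?_⟩
    rw [Equiv.sum_comp e.symm (fun a => ({f a} : Multiset Segment))]
    exact map_univ_eq_sum f
  obtain ⟨F, hF, hsum⟩ := Nat.sInf_mem hne
  unfold widthM
  generalize (sInf {k : ℕ | _} : ℕ) = w at F hF hsum ⊢
  choose k g hk hg hFg using hF
  let G : (Σ j, Fin (k j)) → Segment := fun p => g p.1 p.2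
  have hG : Multiset.map f Finset.univ.val = Multiset.map G Finset.univ.val := by
    rw [hsum, map_univ_eq_sum G, Fintype.sum_sigma]
    exact Finset.sum_congr rfl fun j _ => by rw [hFg j, map_univ_eq_sum]
  obtain ⟨e, he⟩ := exists_equiv_of_map_univ_eq f G hG
  refine ⟨fun a => ((e a).1 : ℕ), fun a => (e a).1.2, ?_⟩
  intro a a' hne hcc
  have hcc' : (e a).1 = (e a').1 := Fin.ext hcc
  have hne' : e a ≠ e a' := fun h => hne (e.injective h)
  rw [he, he]
  simp only [G]
  generalize e a = p at *
  generalize e a' = q at *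
  obtain ⟨j, s⟩ := p
  obtain ⟨j', t⟩ := q
  obtain rfl : j = j' := hcc'
  rcases lt_trichotomy s t with h | h | h
  · exact Or.inr (hg j s t h)
  · exact absurd (by rw [h]) hne'
  · exact Or.inl (hg j t s h)

/-! ### Ranks by largest cliques -/

/-- A "largest clique" rank. If the relation `r` on `A` is properly coloured with `W` colours and
`P c ⊆ A` for `c : C`, then `H c`, the largest size of an `r`-clique inside `P c`, is at most `W`,
and it grows when `P c` is enlarged by an element `r`-related to all of `P c`; it is below `W` as
soon as such an element exists. -/
lemma exists_clique_rank {A C : Type*} [Fintype A] (r : A → A → Prop) (hsymm : ∀ a a', r a a' → r a' a)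
    (W : ℕ) (col : A → ℕ) (hW : ∀ a, col a < W) (hcol : ∀ a a', a ≠ a' → r a a' → col a ≠ col a')
    (P : C → A → Prop) :
    ∃ H : C → ℕ, (∀ c, H c ≤ W) ∧ (∀ c a, P c a → 1 ≤ H c) ∧
      (∀ c a, (∀ a', P c a' → a' ≠ a ∧ r a a') → H c + 1 ≤ W) ∧
      (∀ c c' a, (∀ a', P c a' → P c' a') → P c' a → (∀ a', P c a' → a' ≠ a ∧ r a a') →
        H c + 1 ≤ H c') := by
  classical
  let K : C → Finset (Finset A) := fun c =>
    Finset.univ.filter fun S => (∀ a ∈ S, P c a) ∧ ∀ a ∈ S, ∀ a' ∈ S, a ≠ a' → r a a'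
  have hcard : ∀ S : Finset A, (∀ a ∈ S, ∀ a' ∈ S, a ≠ a' → r a a') → S.card ≤ W := by
    intro S hS
    have : (S.image col).card = S.card := by
      apply Finset.card_image_of_injOn
      intro a ha a' ha' h
      by_contra hne
      exact hcol a a' hne (hS a ha a' ha' hne) h
    rw [← this]
    have h2 : S.image col ⊆ Finset.range W := by
      intro t ht
      obtain ⟨a, -, rfl⟩ := Finset.mem_image.1 ht
      exact Finset.mem_range.2 (hW a)
    simpa using Finset.card_le_card h2
  have hex : ∀ c, ∃ S ∈ K c, (K c).sup Finset.card = S.card := by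
    intro c
    exact Finset.exists_mem_eq_sup _ ⟨∅, by simp [K]⟩ _
  have hins : ∀ a, ∀ S : Finset A, (∀ a ∈ S, ∀ a' ∈ S, a ≠ a' → r a a') →
      (∀ a' ∈ S, a' ≠ a ∧ r a a') →
      (∀ x ∈ insert a S, ∀ y ∈ insert a S, x ≠ y → r x y) ∧ (insert a S).card = S.card + 1 := by
    intro a S hS ha
    constructor
    · intro x hx y hy hxy
      rcases Finset.mem_insert.1 hx with rfl | hx'
      · rcases Finset.mem_insert.1 hy with rfl | hy
        · exact absurd rfl hxy
        · exact (ha y hy).2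
      · rcases Finset.mem_insert.1 hy with rfl | hy
        · exact hsymm _ _ (ha x hx').2
        · exact hS x hx' y hy hxy
    · exact Finset.card_insert_of_notMem fun h => (ha a h).1 rfl
  refine ⟨fun c => (K c).sup Finset.card, ?_, ?_, ?_, ?_⟩
  · intro c
    obtain ⟨S, hS, h⟩ := hex c
    simp only [h]
    exact hcard S (Finset.mem_filter.1 hS).2.2
  · intro c a ha
    have : ({a} : Finset A) ∈ K c := by
      simp [K, ha]
    simpa using Finset.le_sup (f := Finset.card) this
  · intro c a ha
    obtain ⟨S, hS, h⟩ := hex c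
    simp only [h]
    obtain ⟨-, h1, h2⟩ := Finset.mem_filter.1 hS
    obtain ⟨h3, h4⟩ := hins a S h2 fun a' ha' => ha a' (h1 a' ha')
    rw [← h4]
    exact hcard _ h3
  · intro c c' a hsub hPa ha
    obtain ⟨S, hS, h⟩ := hex c
    simp only [h]
    obtain ⟨-, h1, h2⟩ := Finset.mem_filter.1 hS
    obtain ⟨h3, h4⟩ := hins a S h2 fun a' ha' => ha a' (h1 a' ha')
    rw [← h4]
    refine Finset.le_sup (f := Finset.card) (Finset.mem_filter.2 ⟨Finset.mem_univ _, ?_, h3⟩)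
    intro x hx
    rcases Finset.mem_insert.1 hx with rfl | hx
    · exact hPa
    · exact hsub x (h1 x hx)

namespace KVData

variable {D : KVData} {d' : Fin D.n → ℕ} {d : Fin D.n ⊕ Fin D.l → ℤ}
  {σ : Equiv.Perm (Fin D.n ⊕ Fin D.l)}

/-! ### The depth function -/

/-- The depth strictly decreases along `≪`. -/
lemma depth_lt_of_ll (hd : D.DepthSpec d' d) {i i' : Fin D.n}
    (h : Segment.ll (D.iseg i') (D.iseg i)) : d (Sum.inl i) < d (Sum.inl i') := by
  obtain ⟨k, c, h0, hc, hz⟩ := (hd.2.1 i').1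
  have := (hd.2.1 i).2 (show d (Sum.inl i') - 1 ∈ D.depthSet d' i from
    ⟨k + 1, fun r => Nat.casesOn r i c, rfl, ?_, ?_⟩)
  · omega
  · intro r hr
    cases r with
    | zero => simpa [h0] using h
    | succ r => exact hc r (by omega)
  · simp only [hz]; push_cast; ring

lemma depth_le (hd : D.DepthSpec d' d) (i : Fin D.n) : d (Sum.inl i) ≤ d' i :=
  (hd.2.1 i).2 ⟨0, fun _ => i, rfl, by simp, by simp⟩

/-- The depth of `i` is the position of an element of the ladder. -/
lemma exists_eq_depth (hs : D.SigmaSpec d σ) (i : Fin D.n) :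
    ∃ t : Fin D.l, (t : ℤ) = d (Sum.inl i) := by
  induction i using WellFoundedLT.induction with
  | ind i ih =>
    rcases hs.1 i with ⟨i', hi', -⟩ | ⟨-, t, ht, -⟩
    · obtain ⟨t, ht⟩ := ih i' hi'.1.1
      exact ⟨t, ht.trans hi'.1.2⟩
    · exact ⟨t, ht⟩

/-- `j_t` is weakly above every `Δ_i` with `𝔡(i) = t`. -/
lemma le_jseg (hd : D.DepthSpec d' d) {i : Fin D.n} {t : Fin D.l}
    (ht : (t : ℤ) = d (Sum.inl i)) :
    (D.iseg i).b ≤ (D.jseg t).b ∧ (D.iseg i).e ≤ (D.jseg t).e := by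
  obtain ⟨hl, hb, he⟩ := (hd.1 i).1
  have h1 := depth_le hd i
  simp only [Segment.shiftDown] at hb he
  rcases Nat.lt_or_ge t (d' i) with h | h
  · have := D.ladder t ⟨d' i, hl⟩ h
    have h2 := this.1
    have h3 := this.2
    omega
  · obtain rfl : t = ⟨d' i, hl⟩ := Fin.ext (by simp; omega)
    omega

/-- One step of the noncrossing property: `Δ_i` is strictly above the staircase of the next
depth, which is bounded by the `Δ_{i'}` of that depth and by the two half-lines given by
the corresponding `Δ_j`. -/
lemma exists_below_succ (hd : D.DepthSpec d' d) (i : Fin D.n)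
    (hl : d (Sum.inl i) + 1 < D.l) :
    (∃ i', d (Sum.inl i') = d (Sum.inl i) + 1 ∧ Segment.ll (D.iseg i') (D.iseg i)) ∨
    ∃ t : Fin D.l, (t : ℤ) = d (Sum.inl i) + 1 ∧
      ((D.jseg t).b < (D.iseg i).b ∨ (D.jseg t).e < (D.iseg i).e) := by
  obtain ⟨k, c, h0, hc, hz⟩ := (hd.2.1 i).1
  cases k with
  | zero =>
    right
    rw [h0] at hz
    have hlt : d' i + 1 < D.l := by push_cast at hz; omega
    refine ⟨⟨d' i + 1, hlt⟩, by push_cast at hz ⊢; omega, ?_⟩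
    by_contra hcon
    push Not at hcon
    have : d' i + 1 ∈ D.dPrimeSet i :=
      ⟨hlt, by simp only [Segment.shiftDown]; omega, by simp only [Segment.shiftDown]; omega⟩
    have := (hd.1 i).2 this
    omega
  | succ k =>
    left
    have hll := hc 0 (by omega)
    rw [h0] at hll
    refine ⟨c 1, ?_, hll⟩
    have h1 := depth_lt_of_ll hd hll
    have h2 := (hd.2.1 (c 1)).2 (show (d' (c (k + 1)) : ℤ) - k ∈ D.depthSet d' (c 1) from
      ⟨k, fun r => c (r + 1), rfl, fun r hr => hc (r + 1) (by omega), rfl⟩)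
    push_cast at hz
    simp only [zero_add] at *
    omega

/-- `Δ_i` is strictly above the staircase of every larger depth `t'`. -/
lemma exists_below (hd : D.DepthSpec d' d) (t' : ℤ) (hl : t' < D.l) (i : Fin D.n)
    (hi : d (Sum.inl i) < t') :
    (∃ i', d (Sum.inl i') = t' ∧ Segment.ll (D.iseg i') (D.iseg i)) ∨
    ∃ t : Fin D.l, (t : ℤ) = t' ∧
      ((D.jseg t).b < (D.iseg i).b ∨ (D.jseg t).e < (D.iseg i).e) := by
  obtain ⟨m, hm⟩ : ∃ m : ℕ, t' = d (Sum.inl i) + 1 + m :=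
    ⟨(t' - d (Sum.inl i) - 1).toNat, by omega⟩
  induction m generalizing i with
  | zero =>
    have := exists_below_succ hd i (by omega)
    rw [hm]
    simpa using this
  | succ m ih =>
    push_cast at hm
    rcases exists_below_succ hd i (by omega) with ⟨i', h1, h2⟩ | ⟨t, h1, h2⟩
    · rcases ih i' (by omega) (by omega) with ⟨i'', h3, h4⟩ | ⟨t, h3, h4⟩
      · exact Or.inl ⟨i'', h3, h4.1.trans h2.1, h4.2.trans h2.2⟩
      · exact Or.inr ⟨t, h3, h4.imp (·.trans h2.1) (·.trans h2.2)⟩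
    · right
      have hlt : (t : ℕ) + (m + 1) < D.l := by omega
      have := D.ladder t ⟨t + (m + 1), hlt⟩ (Fin.lt_def.2 (by simp))
      exact ⟨⟨t + (m + 1), hlt⟩, by push_cast; omega, h2.imp this.1.trans this.2.trans⟩

/-! ### Breaking ties -/

/-- Lexicographic encoding: begin points, ties broken by the order of `I`, with `J` on top. -/
def B (D : KVData) : Fin D.n ⊕ Fin D.l → ℤ
  | Sum.inl i => (D.iseg i).b * (D.n + 1) + i
  | Sum.inr t => (D.jseg t).b * (D.n + 1) + D.n

/-- Lexicographic encoding: end points, ties broken by the reversed order of `I`, with `J` on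
top. -/
def E (D : KVData) : Fin D.n ⊕ Fin D.l → ℤ
  | Sum.inl i => (D.iseg i).e * (D.n + 1) + (D.n - 1 - i)
  | Sum.inr t => (D.jseg t).e * (D.n + 1) + D.n

lemma lex_lt_iff {N a c p q : ℤ} (hp : 0 ≤ p) (hpN : p ≤ N) (hq : 0 ≤ q) (hqN : q ≤ N) :
    a * (N + 1) + p < c * (N + 1) + q ↔ a < c ∨ a = c ∧ p < q := by
  constructor
  · intro h
    rcases lt_trichotomy a c with h1 | h1 | h1
    · exact Or.inl h1
    · subst h1; exact Or.inr ⟨rfl, by omega⟩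
    · exfalso; nlinarith
  · rintro (h | ⟨rfl, h⟩)
    · nlinarith
    · omega

lemma B_inl_inl (i i' : Fin D.n) : D.B (Sum.inl i) < D.B (Sum.inl i') ↔ i < i' := by
  have h1 := i.2
  have h2 := i'.2
  simp only [B]
  rw [lex_lt_iff (by omega) (by omega) (by omega) (by omega)]
  constructor
  · intro h
    by_contra hlt
    rcases (not_lt.1 hlt).lt_or_eq with h3 | rfl
    · have := D.iOrder _ _ h3
      have := Fin.lt_def.1 h3
      omega
    · omega
  · intro h
    have := D.iOrder _ _ h
    have := Fin.lt_def.1 h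
    omega

lemma B_inl_inr (i : Fin D.n) (t : Fin D.l) :
    D.B (Sum.inl i) < D.B (Sum.inr t) ↔ (D.iseg i).b ≤ (D.jseg t).b := by
  have h1 := i.2
  simp only [B]
  rw [lex_lt_iff (by omega) (by omega) (by omega) (by omega)]
  omega

lemma B_inr_inr (t t' : Fin D.l) :
    D.B (Sum.inr t) < D.B (Sum.inr t') ↔ (D.jseg t).b < (D.jseg t').b := by
  simp only [B]
  rw [lex_lt_iff (by omega) (by omega) (by omega) (by omega)]
  omega

lemma E_inl_inl (i i' : Fin D.n) : D.E (Sum.inl i) < D.E (Sum.inl i') ↔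
    (D.iseg i).e < (D.iseg i').e ∨ (D.iseg i).e = (D.iseg i').e ∧ i' < i := by
  have h1 := i.2
  have h2 := i'.2
  simp only [E]
  rw [lex_lt_iff (by omega) (by omega) (by omega) (by omega), Fin.lt_def]
  omega

lemma E_inl_inr (i : Fin D.n) (t : Fin D.l) :
    D.E (Sum.inl i) < D.E (Sum.inr t) ↔ (D.iseg i).e ≤ (D.jseg t).e := by
  have h1 := i.2
  simp only [E]
  rw [lex_lt_iff (by omega) (by omega) (by omega) (by omega)]
  omega

lemma E_inr_inr (t t' : Fin D.l) :
    D.E (Sum.inr t) < D.E (Sum.inr t') ↔ (D.jseg t).e < (D.jseg t').e := by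
  simp only [E]
  rw [lex_lt_iff (by omega) (by omega) (by omega) (by omega)]
  omega

lemma B_lt_of_b_lt {x y : Fin D.n ⊕ Fin D.l} (h : (D.segOf x).b < (D.segOf y).b) :
    D.B x < D.B y := by
  rcases x with i | t <;> rcases y with i' | t' <;> simp only [B, segOf, Sum.elim_inl,
    Sum.elim_inr] at h ⊢ <;>
    rw [lex_lt_iff (by omega) (by omega) (by omega) (by omega)] <;> exact Or.inl h

lemma E_lt_of_e_lt {x y : Fin D.n ⊕ Fin D.l} (h : (D.segOf x).e < (D.segOf y).e) :
    D.E x < D.E y := by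
  rcases x with i | t <;> rcases y with i' | t' <;> simp only [E, segOf, Sum.elim_inl,
    Sum.elim_inr] at h ⊢ <;>
    rw [lex_lt_iff (by omega) (by omega) (by omega) (by omega)] <;> exact Or.inl h

lemma b_le_of_B_lt {x y : Fin D.n ⊕ Fin D.l} (h : D.B x < D.B y) :
    (D.segOf x).b ≤ (D.segOf y).b :=
  not_lt.1 fun h' => lt_asymm h (B_lt_of_b_lt h')

lemma e_le_of_E_lt {x y : Fin D.n ⊕ Fin D.l} (h : D.E x < D.E y) :
    (D.segOf x).e ≤ (D.segOf y).e :=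
  not_lt.1 fun h' => lt_asymm h (E_lt_of_e_lt h')

lemma j_ladder_inj {t t' : Fin D.l} (h : ¬ Segment.ll (D.jseg t) (D.jseg t'))
    (h' : ¬ Segment.ll (D.jseg t') (D.jseg t)) : t = t' := by
  rcases lt_trichotomy t t' with h1 | h1 | h1
  · exact absurd (D.ladder _ _ h1) h'
  · exact h1
  · exact absurd (D.ladder _ _ h1) h

lemma B_inj : Function.Injective D.B := by
  have key : ∀ (i : Fin D.n) (t : Fin D.l), D.B (Sum.inl i) ≠ D.B (Sum.inr t) := by
    intro i t h
    have h1 := (B_inl_inr i t).not.1 h.not_lt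
    have := B_lt_of_b_lt (D := D) (x := Sum.inr t) (y := Sum.inl i) (by simpa [segOf] using h1)
    omega
  rintro (i | t) (i' | t') h
  · have h1 := (B_inl_inl i i').not.1 (by omega)
    have h2 := (B_inl_inl i' i).not.1 (by omega)
    rw [le_antisymm (not_lt.1 h2) (not_lt.1 h1)]
  · exact absurd h (key _ _)
  · exact absurd h.symm (key _ _)
  · have h1 := (B_inr_inr t t').not.1 (by omega)
    have h2 := (B_inr_inr t' t).not.1 (by omega)
    rw [j_ladder_inj (fun h => h1 h.1) (fun h => h2 h.1)]

lemma E_inj : Function.Injective D.E := by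
  have key : ∀ (i : Fin D.n) (t : Fin D.l), D.E (Sum.inl i) ≠ D.E (Sum.inr t) := by
    intro i t h
    have h1 := (E_inl_inr i t).not.1 h.not_lt
    have := E_lt_of_e_lt (D := D) (x := Sum.inr t) (y := Sum.inl i) (by simpa [segOf] using h1)
    omega
  rintro (i | t) (i' | t') h
  · have h1 := (E_inl_inl i i').not.1 (by omega)
    have h2 := (E_inl_inl i' i).not.1 (by omega)
    push Not at h1 h2
    have : i = i' := le_antisymm (h1.2 (by omega)) (h2.2 (by omega))
    rw [this]
  · exact absurd h (key _ _)
  · exact absurd h.symm (key _ _)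
  · have h1 := (E_inr_inr t t').not.1 (by omega)
    have h2 := (E_inr_inr t' t).not.1 (by omega)
    rw [j_ladder_inj (fun h => h1 h.2) (fun h => h2 h.2)]

/-! ### Staircases do not cross -/

lemma depth_sigma (hd : D.DepthSpec d' d) (hs : D.SigmaSpec d σ) (x : Fin D.n ⊕ Fin D.l) :
    d (σ x) = d x := by
  rcases x with i | t
  · rcases hs.1 i with ⟨i', hi', h⟩ | ⟨-, t, ht, h⟩
    · rw [h]; exact hi'.1.2
    · rw [h, hd.2.2, ht]
  · rcases hs.2 t with ⟨i', hi', h⟩ | ⟨-, h⟩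
    · rw [h, hd.2.2]; exact hi'.1
    · rw [h]

lemma exists_top (hd : D.DepthSpec d' d) (hs : D.SigmaSpec d σ) (x : Fin D.n ⊕ Fin D.l) :
    ∃ t : Fin D.l, (t : ℤ) = d x := by
  rcases x with i | t
  · exact exists_eq_depth hs i
  · exact ⟨t, (hd.2.2 t).symm⟩

/-- The element of `J` bounds its whole depth fiber. -/
lemma le_top (hd : D.DepthSpec d' d) {x : Fin D.n ⊕ Fin D.l} {t : Fin D.l} (ht : (t : ℤ) = d x) :
    (D.segOf x).b ≤ (D.jseg t).b ∧ (D.segOf x).e ≤ (D.jseg t).e := by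
  rcases x with i | t'
  · exact le_jseg hd ht
  · obtain rfl : t = t' := Fin.ext (by have := hd.2.2 t'; omega)
    exact ⟨le_rfl, le_rfl⟩

/-- Noncrossing from an element of `I`: below `Δ_i` there is an element of each deeper fiber,
unless `Δ_i` lies strictly to one side of the entire fiber. -/
lemma below_inl (hd : D.DepthSpec d' d) (hs : D.SigmaSpec d σ) {i : Fin D.n}
    {x : Fin D.n ⊕ Fin D.l} (h : d (Sum.inl i) < d x) :
    (∃ c, d (Sum.inl c) = d x ∧ Segment.ll (D.iseg c) (D.iseg i)) ∨
    (∀ y, d y = d x → (D.segOf y).b < (D.iseg i).b) ∨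
    (∀ y, d y = d x → (D.segOf y).e < (D.iseg i).e) := by
  obtain ⟨t, ht⟩ := exists_top hd hs x
  rcases exists_below hd (d x) (by omega) i h with h1 | ⟨t', ht', h1 | h1⟩
  · exact Or.inl h1
  · exact Or.inr (Or.inl fun y hy => (le_top hd (ht'.trans hy.symm)).1.trans_lt h1)
  · exact Or.inr (Or.inr fun y hy => (le_top hd (ht'.trans hy.symm)).2.trans_lt h1)

/-- Noncrossing from an element of `J`. -/
lemma below_inr (hd : D.DepthSpec d' d) (hs : D.SigmaSpec d σ) {t : Fin D.l}
    {y : Fin D.n ⊕ Fin D.l} (h : d (Sum.inr t) < d y) :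
    (D.segOf y).b < (D.jseg t).b ∧ (D.segOf y).e < (D.jseg t).e := by
  obtain ⟨t', ht'⟩ := exists_top hd hs y
  have := le_top hd ht'
  rw [hd.2.2] at h
  have h2 := D.ladder t t' (Fin.lt_def.2 (by omega))
  exact ⟨this.1.trans_lt h2.1, this.2.trans_lt h2.2⟩

/-- Within a fiber, end points increase as indices decrease. -/
lemma E_le_of_le (hd : D.DepthSpec d' d) {i i' : Fin D.n} (h : i ≤ i')
    (hdd : d (Sum.inl i) = d (Sum.inl i')) : D.E (Sum.inl i') ≤ D.E (Sum.inl i) := by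
  by_contra hlt
  rcases (E_inl_inl i i').1 (not_le.1 hlt) with h1 | ⟨-, h1⟩
  · rcases h.lt_or_eq with h2 | rfl
    · rcases D.iOrder _ _ h2 with h3 | h3
      · have := depth_lt_of_ll hd ⟨h3, h1⟩
        omega
      · omega
    · omega
  · exact absurd h1 (not_lt.2 h)

/-- Elements of `I` further along the cycle than `x` have end points at least that of
`σ(x)`. -/
lemma E_sigma_le (hd : D.DepthSpec d' d) (hs : D.SigmaSpec d σ) {x : Fin D.n ⊕ Fin D.l}
    {y : Fin D.n} (h : d (Sum.inl y) = d x) (hB : D.B (Sum.inl y) < D.B x) :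
    D.E (σ x) ≤ D.E (Sum.inl y) := by
  rcases x with i | t
  · have hlt := (B_inl_inl y i).1 hB
    rcases hs.1 i with ⟨i', hi', h'⟩ | ⟨h', -⟩
    · rw [h']
      exact E_le_of_le hd (hi'.2 ⟨hlt, h⟩) (h.trans hi'.1.2.symm)
    · exact absurd ⟨y, hlt, h⟩ h'
  · rw [hd.2.2] at h
    rcases hs.2 t with ⟨i', hi', h'⟩ | ⟨h', -⟩
    · rw [h']
      exact E_le_of_le hd (hi'.2 h) (h.trans hi'.1.symm)
    · exact absurd ⟨y, h⟩ h'

lemma E_lt_sigma (hd : D.DepthSpec d' d) (hs : D.SigmaSpec d σ) (i : Fin D.n) :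
    D.E (Sum.inl i) < D.E (σ (Sum.inl i)) := by
  rcases hs.1 i with ⟨i', hi', h'⟩ | ⟨-, t, ht, h'⟩
  · rw [h']
    refine lt_of_le_of_ne (E_le_of_le hd hi'.1.1.le hi'.1.2) fun h => ?_
    have := Sum.inl.inj (E_inj h)
    exact hi'.1.1.ne this.symm
  · rw [h', E_inl_inr]
    exact (le_jseg hd ht).2

lemma B_sigma_lt (hd : D.DepthSpec d' d) (hs : D.SigmaSpec d σ) {x : Fin D.n ⊕ Fin D.l}
    {i : Fin D.n} (h : σ x = Sum.inl i) : D.B (Sum.inl i) < D.B x := by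
  rcases x with k | t
  · rcases hs.1 k with ⟨i', hi', h'⟩ | ⟨-, t, ht, h'⟩
    · obtain rfl : i' = i := Sum.inl.inj (h'.symm.trans h)
      exact (B_inl_inl _ _).2 hi'.1.1
    · rw [h'] at h; cases h
  · have h1 := depth_sigma hd hs (Sum.inr t)
    rw [h, hd.2.2] at h1
    exact (B_inl_inr _ _).2 (le_jseg hd h1.symm).1

/-- The staircases of the depth fibers do not cross: with `Δ_{σ(x)}` (at `-∞` horizontally if it
is in `J`) to the left of `z`, and `Δ_z` (at `-∞` vertically if it is in `J`) below `σ(x)`,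
the point `♣z` cannot be to the upper left of `♣x`. -/
lemma noncrossing (hd : D.DepthSpec d' d) (hs : D.SigmaSpec d σ) {x z : Fin D.n ⊕ Fin D.l}
    (hB : D.B z < D.B x) (hE : D.E (σ x) < D.E (σ z))
    (h1 : ∀ i, σ x = Sum.inl i → D.B (Sum.inl i) < D.B z)
    (h2 : ∀ i, z = Sum.inl i → D.E (Sum.inl i) < D.E (σ x)) : False := by
  have hσx := depth_sigma hd hs x
  have hσz := depth_sigma hd hs z
  rcases lt_trichotomy (d x) (d z) with h | h | h
  · cases hy : σ x with
    | inl i =>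
      have h1 := h1 i hy
      rw [hy] at hσx hE
      rcases below_inl hd hs (i := i) (x := z) (by omega) with ⟨c, hc, hll⟩ | h3 | h3
      · have := E_sigma_le hd hs hc
          ((B_lt_of_b_lt (x := Sum.inl c) (y := Sum.inl i) hll.1).trans h1)
        have := E_lt_of_e_lt (D := D) (x := Sum.inl c) (y := Sum.inl i) hll.2
        omega
      · have := B_lt_of_b_lt (x := z) (y := Sum.inl i) (h3 z rfl)
        omega
      · have := E_lt_of_e_lt (x := σ z) (y := Sum.inl i) (h3 _ hσz)
        omega
    | inr t =>
      rw [hy] at hσx hE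
      have := E_lt_of_e_lt (x := σ z) (y := Sum.inr t) (below_inr hd hs (by omega)).2
      omega
  · rcases z with i | t
    · have := E_sigma_le hd hs h.symm hB
      have := h2 i rfl
      omega
    · have := b_le_of_B_lt hB
      rw [hd.2.2] at h
      have h3 := (le_top hd h.symm).1
      rcases h3.lt_or_eq with h4 | h4
      · have := B_lt_of_b_lt (D := D) (x := x) (y := Sum.inr t) h4
        omega
      · rcases x with i | t'
        · have := (B_inl_inr i t).2 h3
          omega
        · have := (B_inr_inr t t').1 hB
          simp only [segOf, Sum.elim_inr] at h4
          omega
  · rcases z with i | t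
    · have h2 := h2 i rfl
      rcases below_inl hd hs h with ⟨c, hc, hll⟩ | h3 | h3
      · have := E_sigma_le hd hs hc
          ((B_lt_of_b_lt (x := Sum.inl c) (y := Sum.inl i) hll.1).trans hB)
        have := E_lt_of_e_lt (D := D) (x := Sum.inl c) (y := Sum.inl i) hll.2
        omega
      · have := B_lt_of_b_lt (x := x) (y := Sum.inl i) (h3 x rfl)
        omega
      · have := E_lt_of_e_lt (x := σ x) (y := Sum.inl i) (h3 _ hσx)
        omega
    · have := B_lt_of_b_lt (x := x) (y := Sum.inr t) (below_inr hd hs h).1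
      omega

/-- If `♣x` is to the lower left of `♣y` in the tie-broken order, then `x` is deeper. -/
lemma depth_lt_of_club (hd : D.DepthSpec d' d) (hs : D.SigmaSpec d σ) {x y : Fin D.n ⊕ Fin D.l}
    (hB : D.B x < D.B y) (hE : D.E (σ x) < D.E (σ y)) : d y < d x := by
  have hσy := depth_sigma hd hs y
  by_contra hle
  rcases x with i | t
  · have hlt := E_lt_sigma hd hs i
    rcases (not_lt.1 hle).lt_or_eq with h | h
    · rcases below_inl hd hs h with ⟨c, hc, hll⟩ | h3 | h3
      · have := E_sigma_le hd hs hc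
          ((B_lt_of_b_lt (x := Sum.inl c) (y := Sum.inl i) hll.1).trans hB)
        have := E_lt_of_e_lt (D := D) (x := Sum.inl c) (y := Sum.inl i) hll.2
        omega
      · have := B_lt_of_b_lt (x := y) (y := Sum.inl i) (h3 y rfl)
        omega
      · have := E_lt_of_e_lt (x := σ y) (y := Sum.inl i) (h3 _ hσy)
        omega
    · have := E_sigma_le hd hs h hB
      omega
  · rcases (not_lt.1 hle).lt_or_eq with h | h
    · have := B_lt_of_b_lt (x := y) (y := Sum.inr t) (below_inr hd hs h).1
      omega
    · rcases y with i | t'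
      · rw [hd.2.2] at h
        have := (B_inl_inr i t).2 (le_top hd h).1
        omega
      · rw [hd.2.2, hd.2.2] at h
        have := (B_inr_inr t t').1 hB
        obtain rfl : t = t' := Fin.ext (by omega)
        omega

/-- On the `♣`-points, breaking ties creates no new comparabilities. -/
lemma club_ll (hd : D.DepthSpec d' d) (hs : D.SigmaSpec d σ) {x y : Fin D.n ⊕ Fin D.l}
    (hB : D.B x < D.B y) (hE : D.E (σ x) < D.E (σ y)) :
    (D.segOf x).b < (D.segOf y).b ∧ (D.segOf (σ x)).e < (D.segOf (σ y)).e := by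
  have hlt := depth_lt_of_club hd hs hB hE
  have hσx := depth_sigma hd hs x
  have hσy := depth_sigma hd hs y
  constructor
  · refine lt_of_le_of_ne (b_le_of_B_lt hB) fun heq => ?_
    rcases y with k | t
    · rcases x with i | t
      · have hik := (B_inl_inl _ _).1 hB
        have hi := D.iOrder _ _ hik
        simp only [segOf, Sum.elim_inl] at heq
        rcases below_inl hd hs hlt with ⟨c, hc, hll⟩ | h3 | h3
        · have h4 := E_sigma_le hd hs hc
            (B_lt_of_b_lt (x := Sum.inl c) (y := Sum.inl i)
              (by simp only [segOf, Sum.elim_inl, heq]; exact hll.1))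
          have h5 := E_lt_of_e_lt (D := D) (x := Sum.inl c) (y := Sum.inl i)
            (by simp only [segOf, Sum.elim_inl]; have := hll.2; omega)
          have := E_lt_sigma hd hs i
          omega
        · have := h3 _ rfl
          simp only [segOf, Sum.elim_inl] at this
          omega
        · have := h3 _ rfl
          simp only [segOf, Sum.elim_inl] at this
          omega
      · have := (B_inl_inr k t).not.1 (by omega)
        simp only [segOf, Sum.elim_inl, Sum.elim_inr] at heq
        omega
    · have := (below_inr hd hs hlt).1
      simp only [segOf, Sum.elim_inr] at heq this
      omega
  · refine lt_of_le_of_ne (e_le_of_E_lt hE) fun heq => ?_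
    rw [← hσx, ← hσy] at hlt
    generalize σ x = u at *
    generalize σ y = v at *
    rcases v with k | t
    · rcases u with i | t
      · simp only [segOf, Sum.elim_inl] at heq
        have hki : k < i := by
          rcases (E_inl_inl i k).1 hE with h | h
          · omega
          · exact h.2
        have hk := D.iOrder _ _ hki
        rcases below_inl hd hs hlt with ⟨c, hc, hll⟩ | h3 | h3
        · have h4 := E_sigma_le hd hs hc
            (B_lt_of_b_lt (x := Sum.inl c) (y := Sum.inl i)
              (by simp only [segOf, Sum.elim_inl]; have := hll.1; omega))
          have h5 := E_lt_of_e_lt (D := D) (x := Sum.inl c) (y := Sum.inl i)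
            (by simp only [segOf, Sum.elim_inl, heq]; exact hll.2)
          have := E_lt_sigma hd hs i
          omega
        · have := h3 _ rfl
          simp only [segOf, Sum.elim_inl] at this
          omega
        · have := h3 _ rfl
          simp only [segOf, Sum.elim_inl] at this
          omega
      · have := (E_inl_inr k t).not.1 (by omega)
        simp only [segOf, Sum.elim_inl, Sum.elim_inr] at heq
        omega
    · have := (below_inr hd hs hlt).2
      simp only [segOf, Sum.elim_inr] at heq this
      omega

/-! ### Transporting colourings -/

lemma iseg_ll_of_lt {i i' : Fin D.n} (hB : D.B (Sum.inl i) < D.B (Sum.inl i'))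
    (hE : D.E (Sum.inl i) < D.E (Sum.inl i')) : Segment.ll (D.iseg i) (D.iseg i') := by
  have h1 := (B_inl_inl _ _).1 hB
  have h2 := D.iOrder _ _ h1
  rcases (E_inl_inl _ _).1 hE with h | h
  · exact ⟨by omega, h⟩
  · exact absurd h.2 h1.not_gt

/-- A colouring of `𝔪` with `w` colours yields one of `K'(𝔩,𝔪)` with `w + 1` colours: colour `♣x`
by the largest size of a nested family of `Δ_i` weakly to the lower right of `♣x`. -/
lemma upper (hd : D.DepthSpec d' d) (hs : D.SigmaSpec d σ)
    (club : Fin D.n ⊕ Fin D.l → Segment) (hb : ∀ x, (club x).b = (D.segOf x).b)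
    (he : ∀ x, (club x).e = (D.segOf (σ x)).e) (w : ℕ) (col : Fin D.n → ℕ) (hw : ∀ i, col i < w)
    (hcol : ∀ i i', i ≠ i' → col i = col i' → (D.iseg i).Comp (D.iseg i')) :
    ∃ c : Fin D.n ⊕ Fin D.l → ℕ, (∀ x, c x < w + 1) ∧
      ∀ x y, x ≠ y → c x = c y → (club x).Comp (club y) := by
  obtain ⟨H, hH, -, -, hH4⟩ := exists_clique_rank
    (fun i i' : Fin D.n =>
      (D.B (Sum.inl i) < D.B (Sum.inl i') ∧ D.E (Sum.inl i') < D.E (Sum.inl i)) ∨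
      (D.B (Sum.inl i') < D.B (Sum.inl i) ∧ D.E (Sum.inl i) < D.E (Sum.inl i')))
    (fun a a' h => h.symm) w col hw
    (by
      intro i i' hne hr hc
      rcases hcol i i' hne hc with h | h
      · have := B_lt_of_b_lt (D := D) (x := Sum.inl i) (y := Sum.inl i') h.1
        have := E_lt_of_e_lt (D := D) (x := Sum.inl i) (y := Sum.inl i') h.2
        omega
      · have := B_lt_of_b_lt (D := D) (x := Sum.inl i') (y := Sum.inl i) h.1
        have := E_lt_of_e_lt (D := D) (x := Sum.inl i') (y := Sum.inl i) h.2
        omega)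
    (fun (x : Fin D.n ⊕ Fin D.l) i => D.B x ≤ D.B (Sum.inl i) ∧ D.E (Sum.inl i) ≤ D.E (σ x))
  have key : ∀ x z, D.B z < D.B x → D.E (σ x) < D.E (σ z) → H x + 1 ≤ H z := by
    intro x z hB hE
    -- some `Δ_i` separates `♣x` from `♣z`, namely `σ(x)` or `z`
    have hsep : ∃ i : Fin D.n, D.B z ≤ D.B (Sum.inl i) ∧ D.B (Sum.inl i) < D.B x ∧
        D.E (σ x) ≤ D.E (Sum.inl i) ∧ D.E (Sum.inl i) ≤ D.E (σ z) := by
      by_contra hno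
      push Not at hno
      refine noncrossing hd hs hB hE (fun i hi => ?_) (fun i hi => ?_)
      · by_contra hlt
        have := hno i (by omega) (B_sigma_lt hd hs hi) (by rw [hi])
        rw [hi] at hE
        omega
      · by_contra hlt
        have h1 := E_lt_sigma hd hs i
        subst hi
        have := hno i le_rfl hB (by omega)
        omega
    obtain ⟨i, h1, h2, h3, h4⟩ := hsep
    refine hH4 x z i (fun a ha => ⟨by omega, by omega⟩) ⟨h1, h4⟩ fun a ha => ?_
    have hne : a ≠ i := by rintro rfl; omega
    refine ⟨hne, Or.inl ⟨by omega, lt_of_le_of_ne (by omega) fun h => ?_⟩⟩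
    exact hne (Sum.inl.inj (E_inj h))
  refine ⟨H, fun x => Nat.lt_succ_of_le (hH x), fun x y hne hxy => ?_⟩
  have hBne : D.B x ≠ D.B y := fun h => hne (B_inj h)
  have hEne : D.E (σ x) ≠ D.E (σ y) := fun h => hne (σ.injective (E_inj h))
  unfold Segment.Comp Segment.ll
  rw [hb, hb, he, he]
  rcases lt_or_gt_of_ne hBne with h1 | h1 <;> rcases lt_or_gt_of_ne hEne with h2 | h2
  · exact Or.inl (club_ll hd hs h1 h2)
  · have := key y x h1 h2; omega
  · have := key x y h1 h2; omega
  · exact Or.inr (club_ll hd hs h1 h2)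

/-- A colouring of `K'(𝔩,𝔪)` with `W` colours yields one of `𝔪` with `W - 1` colours: colour `Δ_i`
by the largest size, minus one, of a nested family of `♣x` to the lower right of `Δ_i`. This size is
positive because of `♣σ⁻¹(i)` and less than `W` because of `♣i`. -/
lemma lower (hd : D.DepthSpec d' d) (hs : D.SigmaSpec d σ)
    (club : Fin D.n ⊕ Fin D.l → Segment) (hb : ∀ x, (club x).b = (D.segOf x).b)
    (he : ∀ x, (club x).e = (D.segOf (σ x)).e) (W : ℕ) (col : Fin D.n ⊕ Fin D.l → ℕ)
    (hW : ∀ x, col x < W) (hcol : ∀ x y, x ≠ y → col x = col y → (club x).Comp (club y)) :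
    ∃ c : Fin D.n → ℕ, (∀ i, c i < W - 1) ∧
      ∀ i i', i ≠ i' → c i = c i' → (D.iseg i).Comp (D.iseg i') := by
  obtain ⟨H, -, hH2, hH3, hH4⟩ := exists_clique_rank
    (fun x y : Fin D.n ⊕ Fin D.l => (D.B x < D.B y ∧ D.E (σ y) < D.E (σ x)) ∨
      (D.B y < D.B x ∧ D.E (σ x) < D.E (σ y)))
    (fun a a' h => h.symm) W col hW
    (by
      intro x y hne hr hc
      have := hcol x y hne hc
      unfold Segment.Comp Segment.ll at this
      rw [hb, hb, he, he] at this
      rcases this with h | h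
      · have := B_lt_of_b_lt h.1
        have := E_lt_of_e_lt h.2
        omega
      · have := B_lt_of_b_lt h.1
        have := E_lt_of_e_lt h.2
        omega)
    (fun (i : Fin D.n) x => D.B (Sum.inl i) < D.B x ∧ D.E (σ x) ≤ D.E (Sum.inl i))
  have hpre : ∀ i : Fin D.n, σ (σ.symm (Sum.inl i)) = Sum.inl i := fun i => σ.apply_symm_apply _
  have hpos : ∀ i, 1 ≤ H i := fun i =>
    hH2 i (σ.symm (Sum.inl i)) ⟨B_sigma_lt hd hs (hpre i), by rw [hpre]⟩
  have hlt : ∀ i, H i + 1 ≤ W := by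
    intro i
    have h1 := E_lt_sigma hd hs i
    refine hH3 i (Sum.inl i) fun x hx => ⟨?_, Or.inl ⟨hx.1, by omega⟩⟩
    rintro rfl
    omega
  -- some `♣x` separates nested `Δ_i` and `Δ_k`, namely that of `k` or of `σ⁻¹(i)`
  have key : ∀ i i', D.B (Sum.inl i) < D.B (Sum.inl i') → D.E (Sum.inl i') < D.E (Sum.inl i) →
      H i' + 1 ≤ H i := by
    intro i i' hB hE
    have hsep : ∃ x, D.B (Sum.inl i) < D.B x ∧ D.B x ≤ D.B (Sum.inl i') ∧
        D.E (Sum.inl i') < D.E (σ x) ∧ D.E (σ x) ≤ D.E (Sum.inl i) := by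
      by_contra hno
      push Not at hno
      have h1 := hno (Sum.inl i') hB le_rfl (E_lt_sigma hd hs i')
      have h2 : D.B (Sum.inl i') < D.B (σ.symm (Sum.inl i)) := by
        by_contra hlt
        have := hno (σ.symm (Sum.inl i)) (B_sigma_lt hd hs (hpre i)) (by omega)
          (by rw [hpre]; exact hE)
        rw [hpre] at this
        omega
      refine noncrossing hd hs h2 (by rw [hpre]; exact h1) (fun k hk => ?_) (fun k hk => ?_)
      · rw [hpre] at hk
        rw [← hk]; exact hB
      · rw [hpre, ← hk]; exact hE
    obtain ⟨x, h1, h2, h3, h4⟩ := hsep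
    refine hH4 i' i x (fun a ha => ⟨by omega, by omega⟩) ⟨h1, h4⟩ fun a ha => ?_
    refine ⟨?_, Or.inl ⟨by omega, by omega⟩⟩
    rintro rfl
    omega
  refine ⟨fun i => H i - 1, fun i => ?_, fun i i' hne hii => ?_⟩
  · have := hpos i
    have := hlt i
    show H i - 1 < W - 1
    omega
  · have h1 := hpos i
    have h2 := hpos i'
    simp only at hii
    have hBne : D.B (Sum.inl i) ≠ D.B (Sum.inl i') := fun h => hne (Sum.inl.inj (B_inj h))
    have hEne : D.E (Sum.inl i) ≠ D.E (Sum.inl i') := fun h => hne (Sum.inl.inj (E_inj h))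
    rcases lt_or_gt_of_ne hBne with h3 | h3 <;> rcases lt_or_gt_of_ne hEne with h4 | h4
    · exact Or.inl (iseg_ll_of_lt h3 h4)
    · have := key i i' h3 h4; omega
    · have := key i' i h3 h4; omega
    · exact Or.inr (iseg_ll_of_lt h3 h4)

end KVData

/-- Let `(𝔩,𝔪)` be a permissible pair with `𝔪` a nonzero
multisegment.  Then the width of the multisegment `K'(𝔩,𝔪)` produced by the inverse
Knuth–Viennot algorithm satisfies `ω(K'(𝔩,𝔪)) = ω(𝔪) + 1`. -/
theorem knuth_step_width (𝔩 𝔪 𝔫 : Multiset Segment) (h : IsKnuthStep 𝔩 𝔪 𝔫) :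
    widthM 𝔫 = widthM 𝔪 + 1 := by
  obtain ⟨D, d', d, σ, club, hd, hs, hb, he, rfl, -, rfl⟩ := h
  obtain ⟨c, hc, hc'⟩ := exists_coloring_widthM D.iseg
  obtain ⟨C, hC, hC'⟩ := exists_coloring_widthM club
  obtain ⟨c₁, h1, h1'⟩ := KVData.upper hd hs club hb he _ c hc hc'
  obtain ⟨c₂, h2, h2'⟩ := KVData.lower hd hs club hb he _ C hC hC'
  have hle := widthM_le_of_coloring club _ c₁ h1 h1'
  have hge := widthM_le_of_coloring D.iseg _ c₂ h2 h2'
  have hpos := hC (Sum.inr ⟨0, D.lpos⟩)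
  unfold KVData.mSeg
  omega
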